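/- arXiv:1403.6911 — 7 statements merged into one kernel-verified Lean document; each statement's English description precedes it below -/
import Mathlib

section
/- Let p < p′ be prime numbers with p′ the smallest prime greater than p (i.e., p and p′ are consecutive primes). If (p′+1)² - (p+1)² > (p′)^{3/2} + p^{3/2}, then p′ - p > (5/7)·√p. -/
/-- key inequality in the proof of Theorem 3.2: if `p < p'` are
consecutive primes with `(p'+1)² - (p+1)² > p'^{3/2} + p^{3/2}`, then `p' - p > (5/7)√p`. -/
theorem stmt4 (p p' : ℕ) (hp : p.Prime) (hp' : p'.Prime) (hlt : p < p')
    (hcons : ∀ r : ℕ, p < r → r < p' → ¬ r.Prime)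
    (h : Real.sqrt p' ^ 3 + Real.sqrt p ^ 3 < ((p' : ℝ) + 1) ^ 2 - ((p : ℝ) + 1) ^ 2) :
    (5 / 7 : ℝ) * Real.sqrt p < (p' : ℝ) - (p : ℝ) := by
  have h2 : (2 : ℝ) ≤ p := by exact_mod_cast hp.two_le
  have h3 : (p : ℝ) + 1 ≤ p' := by exact_mod_cast hlt
  have hab : Real.sqrt p ≤ Real.sqrt p' := Real.sqrt_le_sqrt (by linarith)
  have hb : 0 ≤ Real.sqrt p := Real.sqrt_nonneg _
  have ha2 : Real.sqrt p' ^ 2 = p' := Real.sq_sqrt (by linarith)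
  have hb2 : Real.sqrt p ^ 2 = p := Real.sq_sqrt (by linarith)
  have ea : Real.sqrt p' ^ 3 = Real.sqrt p' * p' := by rw [pow_succ, ha2]; ring
  have eb : Real.sqrt p ^ 3 = Real.sqrt p * p := by rw [pow_succ, hb2]; ring
  rw [ea, eb] at h
  by_contra hc
  have hc := not_lt.mp hc
  have k1 : ((p' : ℝ) - p) * (p' + p + 2) ≤ (5 / 7 * Real.sqrt p) * (p' + p + 2) :=
    mul_le_mul_of_nonneg_right hc (by linarith)
  have k2 : Real.sqrt p * p' ≤ Real.sqrt p' * p' :=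
    mul_le_mul_of_nonneg_right hab (by linarith)
  have k3 : 0 ≤ Real.sqrt p * ((p' : ℝ) + p - 5) := mul_nonneg hb (by linarith)
  linarith
end

section
/- The number of positive integers N ≤ X of the form N = m₁·m₂, where q is a prime power and m₁, m₂ are integers satisfying |m₁ - (q+1)| ≤ 2√q and |m₂ - (q+1)| ≤ 2√q, is O(X^{3/4}) as X → ∞. That is, there are constants C > 0 and X₀ such that for all X ≥ X₀, the cardinality of {N ∈ ℤ : 1 ≤ N ≤ X and ∃ prime power q, ∃ m₁, m₂ ∈ ℤ with |m_i - (q+1)| ≤ 2√q for i = 1,2 and N = m₁m₂} is at most C·X^{3/4}. -/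
/-- The set of positive integers `N ≤ X` that are a product of two integers lying in the
Hasse interval `[q + 1 - 2√q, q + 1 + 2√q]` of a common prime power `q`. -/
def hasseProductSet (X : ℝ) : Set ℕ :=
  {N : ℕ | 1 ≤ N ∧ (N : ℝ) ≤ X ∧
    ∃ q : ℕ, IsPrimePow q ∧ ∃ m₁ m₂ : ℤ,
      |(m₁ : ℝ) - ((q : ℝ) + 1)| ≤ 2 * Real.sqrt q ∧
      |(m₂ : ℝ) - ((q : ℝ) + 1)| ≤ 2 * Real.sqrt q ∧
      (N : ℤ) = m₁ * m₂}

theorem hasse_aux (T : ℝ) (hT : 1 ≤ T) (N q : ℕ) (hNX : (N : ℝ) ≤ T ^ 4) (hq : 2 ≤ q)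
    (a b : ℤ) (hab : a ≤ b)
    (h1 : |(a : ℝ) - ((q : ℝ) + 1)| ≤ 2 * Real.sqrt q)
    (h2 : |(b : ℝ) - ((q : ℝ) + 1)| ≤ 2 * Real.sqrt q)
    (hN : (N : ℤ) = a * b) :
    N ∈ ((Finset.range (⌊T ^ 2⌋₊ + 1) ×ˢ Finset.range (⌊4 * T + 4⌋₊ + 1)).image
      (fun p : ℕ × ℕ => p.1 * (p.1 + p.2))) := by
  set s := Real.sqrt q with hs
  have hss : s ^ 2 = q := Real.sq_sqrt (by positivity)
  have hs0 : 0 ≤ s := Real.sqrt_nonneg _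
  have hq' : (2 : ℝ) ≤ q := by exact_mod_cast hq
  rw [abs_le] at h1 h2
  have hA : (s - 1) ^ 2 ≤ a := by nlinarith
  have hs1 : 1 < s := by nlinarith
  have ha0 : (0 : ℝ) < a := lt_of_lt_of_le (by have : 0 < s - 1 := by linarith
                                               positivity) hA
  have hab' : (a : ℝ) ≤ b := by exact_mod_cast hab
  have hN' : (N : ℝ) = a * b := by exact_mod_cast hN
  have haT : (a : ℝ) ≤ T ^ 2 := by
    refine le_of_not_gt fun h => ?_
    have h5 := mul_le_mul_of_nonneg_left hab' ha0.le
    have h6 : 0 ≤ T ^ 2 := by positivity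
    nlinarith
  have hsT : s - 1 ≤ T := by
    by_contra! h
    nlinarith
  have ha0' : 0 < a := by exact_mod_cast ha0
  lift a to ℕ using ha0'.le
  obtain ⟨d, rfl⟩ := Int.le.dest hab
  push_cast at *
  rw [Finset.mem_image]
  refine ⟨(a, d), ?_, by dsimp; exact_mod_cast hN.symm⟩
  simp only [Finset.mem_product, Finset.mem_range, Nat.lt_succ_iff]
  exact ⟨Nat.le_floor haT, Nat.le_floor (by linarith)⟩

theorem hasse_sub (X T : ℝ) (hT : 1 ≤ T) (hX : X = T ^ 4) :
    hasseProductSet X ⊆ (((Finset.range (⌊T ^ 2⌋₊ + 1) ×ˢ Finset.range (⌊4 * T + 4⌋₊ + 1)).image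
      (fun p : ℕ × ℕ => p.1 * (p.1 + p.2)) : Finset ℕ) : Set ℕ) := by
  rintro N ⟨-, hNX, q, hq, a, b, h1, h2, hN⟩
  rw [hX] at hNX
  rcases le_total a b with h | h
  · exact hasse_aux T hT N q hNX hq.two_le a b h h1 h2 hN
  · exact hasse_aux T hT N q hNX hq.two_le b a h h2 h1 (by rw [hN, mul_comm])

/-- Proposition 4.1: the number of positive integers `N ≤ X` that are a
product of two integers in a common Hasse interval is `O(X^{3/4})`. -/
theorem stmt5 :
    ∃ C : ℝ, 0 < C ∧ ∃ X₀ : ℝ, ∀ X : ℝ, X₀ ≤ X →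
      (hasseProductSet X).Finite ∧
      ((hasseProductSet X).ncard : ℝ) ≤ C * X ^ ((3 : ℝ) / 4) := by
  refine ⟨18, by norm_num, 1, fun X hX => ?_⟩
  have hX0 : 0 ≤ X := by linarith
  have hT : 1 ≤ X ^ ((1 : ℝ) / 4) := Real.one_le_rpow hX (by norm_num)
  have h4 : X = (X ^ ((1 : ℝ) / 4)) ^ 4 := by
    rw [← Real.rpow_natCast, ← Real.rpow_mul hX0]; norm_num
  have h3 : X ^ ((3 : ℝ) / 4) = (X ^ ((1 : ℝ) / 4)) ^ 3 := by
    rw [← Real.rpow_natCast, ← Real.rpow_mul hX0]; norm_num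
  rw [h3]
  generalize X ^ ((1 : ℝ) / 4) = T at *
  have hsub := hasse_sub X T hT h4
  refine ⟨(Finset.finite_toSet _).subset hsub, ?_⟩
  have hc := Set.ncard_le_ncard hsub (Finset.finite_toSet _)
  rw [Set.ncard_coe_finset] at hc
  have hc2 := hc.trans Finset.card_image_le
  rw [Finset.card_product, Finset.card_range, Finset.card_range] at hc2
  have hc3 : ((hasseProductSet X).ncard : ℝ) ≤ (⌊T ^ 2⌋₊ + 1) * (⌊4 * T + 4⌋₊ + 1) := by
    exact_mod_cast hc2
  have f1 : (⌊T ^ 2⌋₊ : ℝ) ≤ T ^ 2 := Nat.floor_le (by positivity)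
  have f2 : (⌊4 * T + 4⌋₊ : ℝ) ≤ 4 * T + 4 := Nat.floor_le (by positivity)
  have g1 : (⌊T ^ 2⌋₊ : ℝ) + 1 ≤ 2 * T ^ 2 := by nlinarith
  have g2 : (⌊4 * T + 4⌋₊ : ℝ) + 1 ≤ 9 * T := by linarith
  calc _ ≤ _ := hc3
    _ ≤ (2 * T ^ 2) * (9 * T) := mul_le_mul g1 g2 (by positivity) (by positivity)
    _ = 18 * T ^ 3 := by ring
end

section
/- The set of positive integers N of the form N = m₁·m₂, where q is a prime power and m₁, m₂ are integers satisfying |m₁ - (q+1)| ≤ 2√q and |m₂ - (q+1)| ≤ 2√q, has natural density zero in the positive integers: the cardinality of its intersection with [1, X], divided by X, tends to 0 as X → ∞. -/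
open Finset in
/-- Number of prime powers up to `x`. -/
lemma hps_primePow_card_le {x : ℝ} (hx : 2 ≤ x) :
    ((((Ioc 0 ⌊x⌋₊).filter IsPrimePow).card : ℕ) : ℝ) ≤
      (Real.log 4 * x / Real.log √x + √x) + (Real.log x / Real.log 2) * √x := by
  have h0 : (0:ℝ) ≤ x := by linarith
  have hl2 : 0 < Real.log 2 := Real.log_pos (by norm_num)
  have hL : 1 ≤ ⌊Real.log x / Real.log 2⌋₊ := by
    apply Nat.le_floor
    rw [Nat.cast_one, le_div_iff₀ hl2, one_mul]
    exact Real.log_le_log (by norm_num) hx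
  have key := Chebyshev.sum_PrimePow_eq_sum_sum (fun _ => (1:ℝ)) h0
  have e1 : ((((Ioc 0 ⌊x⌋₊).filter IsPrimePow).card : ℕ) : ℝ)
      = ∑ n ∈ Ioc 0 ⌊x⌋₊ with IsPrimePow n, (1:ℝ) := by simp
  rw [e1, key, ← Finset.add_sum_Ioc_eq_sum_Icc hL]
  apply add_le_add
  · have := Chebyshev.pi_le_log4_mul_div (x := x) (by linarith)
    refine le_trans (le_of_eq ?_) this
    rw [← Nat.primesLE_card_eq_primeCounting]
    simp only [Nat.cast_one, div_one, Real.rpow_one, sum_const, nsmul_eq_mul, mul_one]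
    congr 2
    ext p
    simp only [mem_filter, mem_Ioc, Nat.mem_primesLE]
    constructor
    · rintro ⟨⟨_, h⟩, hp⟩; exact ⟨h, hp⟩
    · rintro ⟨h, hp⟩; exact ⟨⟨hp.pos, h⟩, hp⟩
  · calc _ ≤ ∑ k ∈ Ioc 1 ⌊Real.log x / Real.log 2⌋₊, √x := by
          apply sum_le_sum
          intro k hk
          have hk1 : 2 ≤ k := (mem_Ioc.1 hk).1
          simp only [sum_const, nsmul_eq_mul, mul_one]
          have c1 : ((Ioc 0 ⌊x ^ ((1 : ℝ) / k)⌋₊).filter Nat.Prime).card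
              ≤ ⌊x ^ ((1 : ℝ) / k)⌋₊ := by
            refine (card_filter_le _ _).trans ?_
            simp
          have c2 : ((⌊x ^ ((1 : ℝ) / k)⌋₊ : ℕ) : ℝ) ≤ x ^ ((1 : ℝ) / k) :=
            Nat.floor_le (by positivity)
          have c3 : x ^ ((1 : ℝ) / k) ≤ √x := by
            rw [Real.sqrt_eq_rpow]
            apply Real.rpow_le_rpow_of_exponent_le (by linarith)
            have : (2:ℝ) ≤ k := by exact_mod_cast hk1
            gcongr
          exact le_trans (by exact_mod_cast c1) (c2.trans c3)
      _ ≤ _ := by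
          simp only [sum_const, nsmul_eq_mul]
          gcongr
          refine le_trans ?_ (Nat.floor_le (a := Real.log x / Real.log 2) ?_)
          · simp
          · have := Real.log_nonneg (x := x) (by linarith)
            positivity

open Finset in
lemma hps_ncard_le {X : ℝ} (hX : 1 ≤ X) :
    ((hasseProductSet X).ncard : ℝ) ≤
      ((((Ioc 0 ⌊4 * √X⌋₊).filter IsPrimePow).card : ℕ) : ℝ) * (25 * (4 * √X)) := by
  classical
  set x : ℝ := 4 * √X with hxdef
  have hs1 : 1 ≤ √X := Real.one_le_sqrt.2 hX
  have hx4 : 4 ≤ x := by linarith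
  set K : ℕ := ⌊2 * √x⌋₊ with hK
  let S : Finset (ℕ × ℤ × ℤ) := ((Ioc 0 ⌊x⌋₊).filter IsPrimePow) ×ˢ
    (Icc (-(K:ℤ)) K ×ˢ Icc (-(K:ℤ)) K)
  let f : ℕ × ℤ × ℤ → ℕ := fun t => (((t.1:ℤ) + 1 + t.2.1) * ((t.1:ℤ) + 1 + t.2.2)).toNat
  have hsub : hasseProductSet X ⊆ ↑(S.image f) := by
    rintro N ⟨hN1, hNX, q, hq, m₁, m₂, h1, h2, hN⟩
    have hq0 : 0 < q := hq.pos
    have hsq : √(q:ℝ) ^ 2 = q := Real.sq_sqrt (by positivity)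
    have hsx : √X ^ 2 = X := Real.sq_sqrt (by linarith)
    have hssx : √(√X) ^ 2 = √X := Real.sq_sqrt (by positivity)
    have g1 : (√(q:ℝ) - 1) ^ 2 ≤ m₁ := by
      have := (abs_le.1 h1).1; nlinarith
    have g2 : (√(q:ℝ) - 1) ^ 2 ≤ m₂ := by
      have := (abs_le.1 h2).1; nlinarith
    have g3 : (√(q:ℝ) - 1) ^ 2 * (√(q:ℝ) - 1) ^ 2 ≤ √X ^ 2 := by
      have hNR : (N:ℝ) = m₁ * m₂ := by exact_mod_cast hN
      rw [hsx]
      refine le_trans ?_ hNX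
      rw [hNR]
      exact mul_le_mul g1 g2 (by positivity) ((by positivity : (0:ℝ) ≤ _).trans g1)
    have g4 : (√(q:ℝ) - 1) ^ 2 ≤ √(√X) ^ 2 := by
      rw [hssx]
      rw [← sq] at g3
      exact le_of_sq_le_sq g3 (by positivity)
    have g5 : √(q:ℝ) - 1 ≤ √(√X) := le_of_sq_le_sq g4 (by positivity)
    have g6 : 1 ≤ √(√X) := Real.one_le_sqrt.2 hs1
    have hqx : (q:ℝ) ≤ x := by
      have : 0 ≤ √(q:ℝ) := by positivity
      nlinarith
    have hle : 2 * √(q:ℝ) ≤ 2 * √x := by gcongr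
    have mem : ∀ m : ℤ, |(m : ℝ) - ((q : ℝ) + 1)| ≤ 2 * Real.sqrt q →
        m - (q + 1) ∈ Icc (-(K:ℤ)) K := by
      intro m hm
      have : |m - ((q:ℤ) + 1)| ≤ (K:ℤ) := by
        rw [Int.abs_eq_natAbs]
        norm_cast
        apply Nat.le_floor
        rw [Nat.cast_natAbs]
        push_cast
        exact hm.trans hle
      exact mem_Icc.2 (abs_le.1 this)
    simp only [coe_image, Set.mem_image, mem_coe]
    refine ⟨(q, m₁ - (q+1), m₂ - (q+1)), ?_, ?_⟩
    · simp only [S, mem_product, mem_filter, mem_Ioc]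
      exact ⟨⟨⟨hq0, Nat.le_floor hqx⟩, hq⟩, mem _ h1, mem _ h2⟩
    · simp only [f]
      have : ((q:ℤ) + 1 + (m₁ - (q+1))) * ((q:ℤ) + 1 + (m₂ - (q+1))) = N := by
        rw [hN]; ring
      rw [this]; simp
  have hc1 : (hasseProductSet X).ncard ≤ S.card := by
    refine (Set.ncard_le_ncard hsub (finite_toSet _)).trans ?_
    rw [Set.ncard_coe_finset]
    exact card_image_le
  have hc2 : S.card = ((Ioc 0 ⌊x⌋₊).filter IsPrimePow).card * ((2*K+1) * (2*K+1)) := by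
    simp only [S, card_product, Int.card_Icc]
    congr 2 <;> omega
  have hKx : (K:ℝ) ≤ 2 * √x := Nat.floor_le (by positivity)
  have hs : √x ^ 2 = x := Real.sq_sqrt (by linarith)
  have hsx1 : 1 ≤ √x := Real.one_le_sqrt.2 (by linarith)
  calc ((hasseProductSet X).ncard : ℝ) ≤ S.card := by exact_mod_cast hc1
    _ = ((((Ioc 0 ⌊x⌋₊).filter IsPrimePow).card : ℕ) : ℝ) * ((2*K+1) * (2*K+1)) := by
        rw [hc2]; push_cast; ring
    _ ≤ _ := by
        refine mul_le_mul_of_nonneg_left ?_ (by positivity)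
        have : (2*(K:ℝ)+1) ≤ 5 * √x := by linarith
        have h0 : 0 ≤ (2*(K:ℝ)+1) := by positivity
        nlinarith

lemma hps_log_div_sqrt :
    Filter.Tendsto (fun x : ℝ => Real.log x / √x) Filter.atTop (nhds 0) := by
  have h := (isLittleO_log_rpow_atTop (r := 1/2) (by norm_num)).tendsto_div_nhds_zero
  simpa only [← Real.sqrt_eq_rpow] using h

lemma hps_aux_tendsto :
    Filter.Tendsto (fun x : ℝ => Real.log 4 / Real.log √x + 1 / √x
      + (1 / Real.log 2) * (Real.log x / √x)) Filter.atTop (nhds 0) := by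
  have hs : Filter.Tendsto (fun x : ℝ => √x) Filter.atTop Filter.atTop := Real.tendsto_sqrt_atTop
  have h1 : Filter.Tendsto (fun x : ℝ => Real.log 4 / Real.log √x) Filter.atTop (nhds 0) :=
    (Real.tendsto_log_atTop.comp hs).const_div_atTop _
  have h2 : Filter.Tendsto (fun x : ℝ => 1 / √x) Filter.atTop (nhds 0) := hs.const_div_atTop _
  have h3 := hps_log_div_sqrt.const_mul (1 / Real.log 2)
  simpa using (h1.add h2).add h3

/-- Corollary 4.2: the positive integers that are a product of two
integers in a common Hasse interval form a set of natural density zero. -/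
theorem stmt6 :
    Filter.Tendsto (fun X : ℝ => ((hasseProductSet X).ncard : ℝ) / X)
      Filter.atTop (nhds 0) := by
  have hx : Filter.Tendsto (fun X : ℝ => 4 * √X) Filter.atTop Filter.atTop :=
    Real.tendsto_sqrt_atTop.const_mul_atTop (by norm_num)
  have hlim := (hps_aux_tendsto.comp hx).const_mul 400
  rw [mul_zero] at hlim
  refine tendsto_of_tendsto_of_tendsto_of_le_of_le' tendsto_const_nhds hlim ?_ ?_
  · filter_upwards [Filter.eventually_ge_atTop 1] with X hX
    positivity
  · filter_upwards [Filter.eventually_ge_atTop 1] with X hX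
    have hs1 : 1 ≤ √X := Real.one_le_sqrt.2 hX
    have hn := hps_ncard_le hX
    have hp := hps_primePow_card_le (x := 4 * √X) (by linarith)
    have hsx : √X ^ 2 = X := Real.sq_sqrt (by linarith)
    simp only [Function.comp]
    set x : ℝ := 4 * √X with hxdef
    have hX16 : X = x ^ 2 / 16 := by rw [hxdef, ← hsx]; simp; ring
    have hx0 : 0 < x := by positivity
    have hs : √x ^ 2 = x := Real.sq_sqrt hx0.le
    have hsp : 0 < √x := Real.sqrt_pos.2 hx0
    rw [div_le_iff₀ (by linarith)]
    refine hn.trans ((mul_le_mul_of_nonneg_right hp (by positivity)).trans (le_of_eq ?_))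
    rw [hX16]
    have e1 : 1 / √x = √x / x := by rw [div_eq_div_iff hsp.ne' hx0.ne']; nlinarith
    have e2 : Real.log x / √x = Real.log x * (√x / x) := by rw [← e1]; ring
    rw [e2, e1]
    field_simp
    ring
end

section
/- There is an integer B₀ > 0 such that for every integer B ≥ B₀ the following holds: if S is a set of subfields of ℂ such that every K ∈ S is a quartic CM-field (a degree-4 number field that is totally complex and admits an automorphism σ : K → K with φ ∘ σ equal to the complex conjugate of φ for every embedding φ : K → ℂ) with absolute discriminant at most B, and no two distinct elements of S are isomorphic as fields, then the cardinality of S is at most B. -/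
open NumberField

theorem red_form (n : ℕ) : ∀ A B C : ℤ, A.toNat ≤ n → 0 < A → 0 < 4*A*C - B^2 →
    ∃ a b : ℤ, ¬ (a = 0 ∧ b = 0) ∧ 3 * (A*a^2 + B*a*b + C*b^2)^2 ≤ 4*A*C - B^2 := by
  induction n with
  | zero => intro A B C h1 h2; omega
  | succ n ih =>
    intro A B C hn hA hD
    -- shift
    obtain ⟨k, hk1, hk2⟩ : ∃ k : ℤ, -A ≤ B + 2*k*A ∧ B + 2*k*A ≤ A := by
      refine ⟨-((B + A) / (2*A)), ?_, ?_⟩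
      · have := Int.emod_nonneg (B+A) (show 2*A ≠ 0 by omega)
        have h := Int.emod_add_mul_ediv (B+A) (2*A)
        nlinarith
      · have := Int.emod_lt_of_pos (B+A) (show 0 < 2*A by omega)
        have h := Int.emod_add_mul_ediv (B+A) (2*A)
        nlinarith
    obtain ⟨B', hB'⟩ : ∃ B', B' = B + 2*k*A := ⟨_, rfl⟩
    obtain ⟨C', hC'⟩ : ∃ C', C' = A*k^2 + B*k + C := ⟨_, rfl⟩
    rw [← hB'] at hk1 hk2
    have hdisc : 4*A*C' - B'^2 = 4*A*C - B^2 := by rw [hB', hC']; ring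
    have hB2 : B'^2 ≤ A^2 := by nlinarith
    by_cases hc : A ≤ C'
    · refine ⟨1, 0, by simp, ?_⟩
      rw [← hdisc]
      nlinarith
    · have hC'pos : 0 < C' := by
        by_contra h
        have : 4*A*C' ≤ 0 := by nlinarith
        nlinarith [sq_nonneg B']
      obtain ⟨a, b, hab, hle⟩ := ih C' B' A (by omega) hC'pos (by linarith)
      -- C' a^2 + B' a b + A b^2 = value at (k a + b, a)
      refine ⟨k*a + b, a, ?_, ?_⟩
      · rintro ⟨h1, h2⟩
        apply hab
        subst h2
        simpa using h1
      · rw [← hdisc]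
        have : A*(k*a+b)^2 + B*(k*a+b)*a + C*a^2 = C'*a^2 + B'*a*b + A*b^2 := by
          rw [hB', hC']; ring
        rw [this]; linarith

noncomputable def TT (B : ℕ) : Finset (Σ _ : ℕ, Σ _ : ℕ, ℤ) :=
  ((Finset.Icc 5 (Nat.sqrt B)).filter (fun d => d % 4 = 0 ∨ d % 4 = 1)).sigma fun d =>
    (Finset.Icc 1 (Nat.sqrt (4*B/(3*d)))).sigma fun u =>
      Finset.Icc (-(Nat.sqrt (u^2/d) : ℤ)) (Nat.sqrt (u^2/d) : ℤ)

theorem sum_half (N : ℕ) : ∑ d ∈ Finset.Icc 1 N, 1 / √(d:ℝ) ≤ 2 * √(N:ℝ) := by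
  induction N with
  | zero => simp
  | succ n ih =>
    rw [Finset.sum_Icc_succ_top (by omega)]
    have h1 : 0 < √((n+1 : ℕ):ℝ) := by positivity
    have h2 : √(n:ℝ) ≤ √((n+1 : ℕ):ℝ) := Real.sqrt_le_sqrt (by push_cast; linarith)
    have h3 := Real.sq_sqrt (show (0:ℝ) ≤ n by positivity)
    have h4 := Real.sq_sqrt (show (0:ℝ) ≤ ((n+1:ℕ):ℝ) by positivity)
    set a := √(n:ℝ)
    set b := √((n+1 : ℕ):ℝ)
    have : 1 / b ≤ 2 * b - 2 * a := by
      rw [div_le_iff₀ h1]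
      push_cast at h4
      nlinarith [sq_nonneg (a-b)]
    linarith

theorem sum_three_half (N : ℕ) : ∑ k ∈ Finset.Icc 2 (N+1), 1 / ((k:ℝ) * √(k:ℝ)) ≤ 2 - 2 / √((N+1:ℕ):ℝ) := by
  induction N with
  | zero => simp
  | succ n ih =>
    rw [Finset.sum_Icc_succ_top (by omega)]
    have h1 : 0 < √((n+1 : ℕ):ℝ) := by positivity
    have h1' : 0 < √((n+1+1 : ℕ):ℝ) := by positivity
    have h2 : √((n+1 : ℕ):ℝ) ≤ √((n+1+1 : ℕ):ℝ) := Real.sqrt_le_sqrt (by push_cast; linarith)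
    have h3 := Real.sq_sqrt (show (0:ℝ) ≤ ((n+1:ℕ):ℝ) by positivity)
    have h4 := Real.sq_sqrt (show (0:ℝ) ≤ ((n+1+1:ℕ):ℝ) by positivity)
    set a := √((n+1 : ℕ):ℝ)
    set b := √((n+1+1 : ℕ):ℝ)
    have hb : ((n+1+1:ℕ):ℝ) = b^2 := h4.symm
    have hba : b^2 = a^2 + 1 := by rw [h3, h4]; push_cast; ring
    rw [hb]
    have : 1 / (b^2 * b) ≤ 2 / a - 2 / b := by
      rw [div_sub_div _ _ h1.ne' h1'.ne', div_le_div_iff₀ (by positivity) (by positivity)]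
      -- a b ≤ 2 (b - a) b^3
      have h5 : (b - a) * (b + a) = 1 := by ring_nf; linarith
      have h6 : 1 ≤ (b - a) * (2*b) := by rw [← h5]; exact mul_le_mul_of_nonneg_left (by linarith) (by linarith)
      have : a * b ≤ b^2 * 1 := by nlinarith
      nlinarith [mul_le_mul_of_nonneg_left h6 (sq_nonneg b)]
    linarith

theorem inner_count (B d : ℕ) (hd : 5 ≤ d) :
    ((∑ u ∈ Finset.Icc 1 (Nat.sqrt (4*B/(3*d))), (Finset.Icc (-(Nat.sqrt (u^2/d) : ℤ)) (Nat.sqrt (u^2/d) : ℤ)).card : ℕ) : ℝ)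
     ≤ (4/3) * B * (1 / (d * √(d:ℝ))) + 3 * √(B:ℝ) * (1 / √(d:ℝ)) := by
  have hd' : (5:ℝ) ≤ d := by exact_mod_cast hd
  have hs : 1 ≤ √(d:ℝ) := Real.one_le_sqrt.mpr (by linarith)
  set U := Nat.sqrt (4*B/(3*d)) with hU
  have hUle : (U:ℝ)^2 ≤ (4/3) * B / d := by
    have h1 : U^2 ≤ 4*B/(3*d) := by rw [sq]; exact Nat.sqrt_le _
    have h2 : ((4*B/(3*d) : ℕ):ℝ) ≤ ((4*B:ℕ):ℝ)/((3*d:ℕ):ℝ) := Nat.cast_div_le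
    have h3 : (U:ℝ)^2 ≤ ((4*B/(3*d) : ℕ):ℝ) := by exact_mod_cast h1
    refine h3.trans (h2.trans (le_of_eq ?_))
    push_cast
    field_simp
  have hstep : ∀ u : ℕ, ((Finset.Icc (-(Nat.sqrt (u^2/d) : ℤ)) (Nat.sqrt (u^2/d) : ℤ)).card : ℝ) ≤ 2 * u / √(d:ℝ) + 1 := by
    intro u
    rw [Int.card_Icc]
    have : ((Nat.sqrt (u^2/d) : ℤ) + 1 - -(Nat.sqrt (u^2/d) : ℤ)).toNat = 2 * Nat.sqrt (u^2/d) + 1 := by omega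
    rw [this]
    push_cast
    have h1 : ((Nat.sqrt (u^2/d) : ℕ):ℝ) ≤ √((u^2/d : ℕ):ℝ) := Real.nat_sqrt_le_real_sqrt
    have h2 : √((u^2/d : ℕ):ℝ) ≤ √((u:ℝ)^2/d) := by
      apply Real.sqrt_le_sqrt
      have := @Nat.cast_div_le ℝ _ _ _ (u^2) d
      exact_mod_cast this
    rw [Real.sqrt_div (by positivity), Real.sqrt_sq (by positivity)] at h2
    have := h1.trans h2
    rw [mul_div_assoc]; linarith
  have hgauss : ∀ n : ℕ, ∑ u ∈ Finset.Icc 1 n, (2 * (u:ℝ) / √(d:ℝ) + 1) = n * (n+1) / √(d:ℝ) + n := by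
    intro n
    induction n with
    | zero => simp
    | succ n ih => rw [Finset.sum_Icc_succ_top (by omega), ih]; push_cast; field_simp; ring
  push_cast
  refine (Finset.sum_le_sum fun u _ => hstep u).trans ?_
  rw [hgauss]
  have hU1 : (U:ℝ) ≤ (3/2) * √(B:ℝ) * (1/√(d:ℝ)) := by
    apply le_of_sq_le_sq _ (by positivity)
    rw [mul_pow, mul_pow, div_pow 1, Real.sq_sqrt (by positivity), Real.sq_sqrt (by positivity)]
    refine hUle.trans ?_
    have : 0 ≤ (B:ℝ)/d := by positivity
    have e1 : (4/3) * (B:ℝ) / d = (4/3) * (B/d) := by ring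
    have e2 : (3/2)^2 * (B:ℝ) * (1^2/d) = (9/4) * (B/d) := by ring
    rw [e1, e2]; linarith
  have h1 : (U:ℝ)*(U+1)/√(d:ℝ) ≤ (4/3) * B / d / √(d:ℝ) + U := by
    have : (U:ℝ)*(U+1)/√(d:ℝ) = (U:ℝ)^2/√(d:ℝ) + U/√(d:ℝ) := by ring
    rw [this]
    gcongr
    exact div_le_self (by positivity) hs
  have h2 : (4/3) * (B:ℝ) / d / √(d:ℝ) = (4/3) * B * (1 / (d * √(d:ℝ))) := by field_simp
  linarith

theorem dsum (N : ℕ) : ∑ d ∈ (Finset.Icc 5 N).filter (fun d => d % 4 = 0 ∨ d % 4 = 1), 1 / ((d:ℝ) * √(d:ℝ)) ≤ 3/5 := by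
  have hsub : (Finset.Icc 5 N).filter (fun d => d % 4 = 0 ∨ d % 4 = 1) ⊆
      insert 5 ((Finset.Icc 2 (N+1)).image (fun k : ℕ => (4*k : ℕ)) ∪ (Finset.Icc 2 (N+1)).image (fun k : ℕ => (4*k+1 : ℕ))) := by
    intro d hd
    simp only [Finset.mem_filter, Finset.mem_Icc, Finset.mem_insert, Finset.mem_union, Finset.mem_image] at hd ⊢
    obtain ⟨⟨h1, h2⟩, h3 | h3⟩ := hd
    · right; left; exact ⟨d/4, by omega, by omega⟩
    · by_cases h : d = 5
      · left; exact h
      · right; right; exact ⟨d/4, by omega, by omega⟩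
  refine (Finset.sum_le_sum_of_subset_of_nonneg hsub (fun _ _ _ => by positivity)).trans ?_
  have hnn : ∀ d : ℕ, 0 ≤ 1 / ((d:ℝ) * √(d:ℝ)) := fun d => by positivity
  have h4 : √(4:ℝ) = 2 := by rw [show (4:ℝ) = 2^2 by norm_num]; exact Real.sqrt_sq (by norm_num)
  have key : ∀ k : ℕ, 2 ≤ k → 1 / (((4*k:ℕ):ℝ) * √((4*k:ℕ):ℝ)) = (1/8) * (1 / ((k:ℝ) * √(k:ℝ))) := by
    intro k hk
    push_cast
    rw [Real.sqrt_mul (by norm_num), h4]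
    have : 0 < (k:ℝ) := by positivity
    have : 0 < √(k:ℝ) := by positivity
    field_simp; norm_num
  have key2 : ∀ k : ℕ, 2 ≤ k → 1 / (((4*k+1:ℕ):ℝ) * √((4*k+1:ℕ):ℝ)) ≤ (1/8) * (1 / ((k:ℝ) * √(k:ℝ))) := by
    intro k hk
    rw [← key k hk]
    have : 0 < ((4*k:ℕ):ℝ) := by positivity
    have h' : ((4*k:ℕ):ℝ) ≤ ((4*k+1:ℕ):ℝ) := by push_cast; linarith
    gcongr
  have hs := sum_three_half N
  have hs2 : ∑ k ∈ Finset.Icc 2 (N+1), 1 / ((k:ℝ) * √(k:ℝ)) ≤ 2 := hs.trans (by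
    have : 0 ≤ 2 / √((N+1:ℕ):ℝ) := by positivity
    linarith)
  have h5 : 1 / (((5:ℕ):ℝ) * √((5:ℕ):ℝ)) ≤ 1/10 := by
    have : (2:ℝ) ≤ √((5:ℕ):ℝ) := by apply Real.le_sqrt_of_sq_le; norm_num
    apply one_div_le_one_div_of_le (by norm_num)
    push_cast at *
    linarith
  have hu : ∑ d ∈ ((Finset.Icc 2 (N+1)).image (fun k : ℕ => (4*k : ℕ)) ∪ (Finset.Icc 2 (N+1)).image (fun k : ℕ => (4*k+1 : ℕ))), 1 / ((d:ℝ) * √(d:ℝ)) ≤ 1/2 := by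
    have := Finset.sum_union_inter (s₁ := (Finset.Icc 2 (N+1)).image (fun k : ℕ => (4*k : ℕ))) (s₂ := (Finset.Icc 2 (N+1)).image (fun k : ℕ => (4*k+1 : ℕ))) (f := fun d : ℕ => 1 / ((d:ℝ) * √(d:ℝ)))
    have h0 : 0 ≤ ∑ d ∈ ((Finset.Icc 2 (N+1)).image (fun k : ℕ => (4*k : ℕ)) ∩ (Finset.Icc 2 (N+1)).image (fun k : ℕ => (4*k+1 : ℕ))), 1 / ((d:ℝ) * √(d:ℝ)) :=
      Finset.sum_nonneg fun d _ => hnn d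
    rw [Finset.sum_image (by intro a _ b _ h; simpa using h), Finset.sum_image (by intro a _ b _ h; simpa using h)] at this
    have e1 : ∑ k ∈ Finset.Icc 2 (N+1), 1 / (((4*k:ℕ):ℝ) * √((4*k:ℕ):ℝ)) ≤ (1/8) * 2 := by
      refine le_trans (le_of_eq (Finset.sum_congr rfl fun k hk => key k (Finset.mem_Icc.mp hk).1)) ?_
      rw [← Finset.mul_sum]; linarith
    have e2 : ∑ k ∈ Finset.Icc 2 (N+1), 1 / (((4*k+1:ℕ):ℝ) * √((4*k+1:ℕ):ℝ)) ≤ (1/8) * 2 := by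
      refine le_trans (Finset.sum_le_sum fun k hk => key2 k (Finset.mem_Icc.mp hk).1) ?_
      rw [← Finset.mul_sum]; linarith
    linarith
  by_cases hm : 5 ∈ ((Finset.Icc 2 (N+1)).image (fun k : ℕ => (4*k : ℕ)) ∪ (Finset.Icc 2 (N+1)).image (fun k : ℕ => (4*k+1 : ℕ)))
  · rw [Finset.insert_eq_of_mem hm]; linarith
  · rw [Finset.sum_insert hm]; linarith

theorem TT_card (B : ℕ) (hB : 10^6 ≤ B) : (TT B).card ≤ B := by
  unfold TT
  rw [Finset.card_sigma]
  simp only [Finset.card_sigma]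
  have hB' : (10:ℝ)^6 ≤ B := by exact_mod_cast hB
  rw [← Nat.cast_le (α := ℝ), Nat.cast_sum]
  refine (Finset.sum_le_sum fun d hd => inner_count B d ?_).trans ?_
  · exact (Finset.mem_Icc.mp (Finset.mem_filter.mp hd).1).1
  rw [Finset.sum_add_distrib, ← Finset.mul_sum, ← Finset.mul_sum]
  have h1 := dsum (Nat.sqrt B)
  have h2 : ∑ d ∈ (Finset.Icc 5 (Nat.sqrt B)).filter (fun d => d % 4 = 0 ∨ d % 4 = 1), 1 / √(d:ℝ) ≤ 2 * √((Nat.sqrt B : ℕ):ℝ) := by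
    refine le_trans (Finset.sum_le_sum_of_subset_of_nonneg ?_ (fun _ _ _ => by positivity)) (sum_half _)
    intro d hd
    simp only [Finset.mem_filter, Finset.mem_Icc] at hd ⊢
    omega
  have h3 : √((Nat.sqrt B : ℕ):ℝ) ≤ √(√(B:ℝ)) := Real.sqrt_le_sqrt Real.nat_sqrt_le_real_sqrt
  have hb4 : (√(√(B:ℝ)))^2 = √(B:ℝ) := Real.sq_sqrt (by positivity)
  have hb2 : (√(B:ℝ))^2 = B := Real.sq_sqrt (by positivity)
  set b := √(√(B:ℝ))
  set c := √(B:ℝ)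
  have hb : 31 ≤ b := by
    apply Real.le_sqrt_of_sq_le
    apply Real.le_sqrt_of_sq_le
    linarith
  have hc : 0 ≤ c := Real.sqrt_nonneg _
  have e1 : (4/3) * (B:ℝ) * ∑ d ∈ (Finset.Icc 5 (Nat.sqrt B)).filter (fun d => d % 4 = 0 ∨ d % 4 = 1), 1 / ((d:ℝ) * √(d:ℝ)) ≤ (4/3) * B * (3/5) := by
    gcongr
  have e2 : 3 * c * ∑ d ∈ (Finset.Icc 5 (Nat.sqrt B)).filter (fun d => d % 4 = 0 ∨ d % 4 = 1), 1 / √(d:ℝ) ≤ 3 * c * (2 * b) := by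
    gcongr
    linarith
  have e3 : 31 * c * b ≤ B := by
    rw [← hb2]
    have : 31 * b ≤ c := by rw [← hb4]; nlinarith
    nlinarith
  nlinarith

theorem ext_basis {M : Type*} [AddCommGroup M] [Module.Free ℤ M] [Module.Finite ℤ M]
    (W : Submodule ℤ M) (hW : ∀ n : ℤ, n ≠ 0 → ∀ x, n • x ∈ W → x ∈ W) {a k : ℕ}
    (bW : Module.Basis (Fin a) ℤ W) (hr : Module.finrank ℤ M = a + k) :
    ∃ b : Module.Basis (Fin a ⊕ Fin k) ℤ M, ∀ i, b (Sum.inl i) = bW i := by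
  have : Module.IsTorsionFree ℤ (M ⧸ W) := by
    refine Module.IsTorsionFree.mk (fun n hn => ?_)
    have hn0 : n ≠ 0 := hn.ne_zero
    intro x y hxy
    obtain ⟨x, rfl⟩ := W.mkQ_surjective x
    obtain ⟨y, rfl⟩ := W.mkQ_surjective y
    simp only [← map_smul] at hxy
    have : n • (x - y) ∈ W := by
      rw [smul_sub]
      exact (Submodule.Quotient.eq W).mp hxy
    exact (Submodule.Quotient.eq W).mpr (hW n hn0 _ this)
  have hfree : Module.Free ℤ (M ⧸ W) := inferInstance
  let bQ := Module.finBasis ℤ (M ⧸ W)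
  let b := Module.Basis.sumQuot bW bQ
  have hc : Module.finrank ℤ (M ⧸ W) = k := by
    have := Module.finrank_eq_card_basis b
    simp at this
    omega
  refine ⟨Module.Basis.sumQuot bW (bQ.reindex (finCongr hc)), fun i => by simp⟩

theorem quad (F : Type*) [Field F] [NumberField F] (h2 : Module.finrank ℚ F = 2) :
    ∃ (b : Module.Basis (Fin 1 ⊕ Fin 1) ℤ (𝓞 F)) (p r : ℤ),
      b (Sum.inl 0) = 1 ∧ (b (Sum.inr 0))^2 = (p : 𝓞 F) + r * b (Sum.inr 0) ∧
      discr F = r^2 + 4 * p ∧ Algebra.trace ℤ (𝓞 F) (b (Sum.inr 0)) = r := by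
  let f : ℤ →ₗ[ℤ] 𝓞 F := Algebra.linearMap ℤ (𝓞 F)
  have hf : Function.Injective f := by
    intro x y h
    simpa [f] using h
  let bW : Module.Basis (Fin 1) ℤ (LinearMap.range f) :=
    (Module.Basis.singleton (Fin 1) ℤ).map (LinearEquiv.ofInjective f hf)
  have hr : Module.finrank ℤ (𝓞 F) = 1 + 1 := by rw [RingOfIntegers.rank, h2]
  obtain ⟨b, hb⟩ := ext_basis (LinearMap.range f) (by
    rintro n hn x ⟨m, hm⟩
    have h1 : (x : F) = algebraMap ℚ F (m / n) := by
      have := congrArg (fun z : 𝓞 F => (z : F)) hm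
      simp [f] at this
      have hn' : (n : F) ≠ 0 := by exact_mod_cast hn
      rw [map_div₀]
      simp only [map_intCast]
      rw [eq_div_iff hn', mul_comm]
      exact this.symm
    have hx : IsIntegral ℤ (x : F) := x.2
    rw [h1, isIntegral_algebraMap_iff (algebraMap ℚ F).injective] at hx
    obtain ⟨y, hy⟩ := IsIntegrallyClosed.isIntegral_iff.mp hx
    refine ⟨y, ?_⟩
    apply RingOfIntegers.coe_injective
    change ((f y : 𝓞 F) : F) = (x : F)
    rw [h1, ← hy]
    simp [f]) bW hr
  have hb1 : b (Sum.inl 0) = 1 := by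
    rw [hb 0]; simp [bW, f]
  set w := b (Sum.inr 0) with hw
  have hrepr : ∀ y, y = (b.repr y (Sum.inl 0) : 𝓞 F) + (b.repr y (Sum.inr 0) : 𝓞 F) * w := by
    intro y
    have := b.sum_repr y
    simp [hb1, ← hw] at this
    exact this.symm
  set p := b.repr (w^2) (Sum.inl 0) with hp
  set r := b.repr (w^2) (Sum.inr 0) with hr'
  have hw2 : w^2 = (p : 𝓞 F) + r * w := hrepr _
  have htr : Algebra.trace ℤ (𝓞 F) w = r := by
    rw [Algebra.trace_eq_matrix_trace b, Matrix.trace]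
    simp only [Fintype.sum_sum_type, Finset.univ_unique, Fin.default_eq_zero, Fin.isValue,
      Finset.sum_singleton, Matrix.diag_apply, Algebra.leftMulMatrix_eq_repr_mul, hb1]
    rw [← hw, ← sq, mul_one, ← hr', hw, b.repr_self]
    simp
  have htr1 : Algebra.trace ℤ (𝓞 F) 1 = 2 := by
    have := Algebra.trace_algebraMap (S := 𝓞 F) (1 : ℤ)
    rw [hr] at this
    simpa using this
  have hint : ∀ n : ℤ, Algebra.trace ℤ (𝓞 F) (n : 𝓞 F) = 2 * n := by
    intro n
    have := Algebra.trace_algebraMap (S := 𝓞 F) (n : ℤ)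
    rw [hr] at this
    simpa using this
  have htr2 : Algebra.trace ℤ (𝓞 F) (w^2) = 2 * p + r * r := by
    rw [hw2, map_add, hint, ← zsmul_eq_mul, map_zsmul, htr, smul_eq_mul]
  refine ⟨b, p, r, hb1, hw2, ?_, htr⟩
  rw [← discr_eq_discr F b, ← Algebra.discr_reindex ℤ b finSumFinEquiv, Algebra.discr_def]
  have e0 : (finSumFinEquiv.symm (0 : Fin (1+1)) : Fin 1 ⊕ Fin 1) = Sum.inl 0 := by decide
  have e1 : (finSumFinEquiv.symm (1 : Fin (1+1)) : Fin 1 ⊕ Fin 1) = Sum.inr 0 := by decide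
  have := Matrix.det_fin_two (Algebra.traceMatrix ℤ (b ∘ (finSumFinEquiv : Fin 1 ⊕ Fin 1 ≃ Fin (1+1)).symm))
  refine this.trans ?_
  simp only [Algebra.traceMatrix_apply, Algebra.traceForm_apply, Function.comp, e0, e1, hb1, ← hw, one_mul, mul_one, ← sq, htr, htr2, htr1, one_pow]
  ring

theorem quad2 (F : Type*) [Field F] [NumberField F] (h2 : Module.finrank ℚ F = 2) :
    ∃ (x : F) (p r : ℤ), discr F = r^2 + 4 * p ∧ x^2 = ((discr F : ℤ) : F) ∧ (∀ m : ℤ, x ≠ m) ∧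
      Algebra.trace ℚ F x = 0 ∧ ∀ y : 𝓞 F, ∃ u v : ℤ, 2 * (y : F) = u + v * x := by
  obtain ⟨b, p, r, hb1, hw2, hd, htr⟩ := quad F h2
  set w := b (Sum.inr 0) with hw
  have hw2' : (w : F)^2 = p + r * w := by
    have := congrArg (fun z : 𝓞 F => (z : F)) hw2
    simpa using this
  refine ⟨2 * (w : F) - r, p, r, hd, ?_, ?_, ?_, ?_⟩
  · rw [hd]; push_cast; linear_combination 4 * hw2'
  · intro m hm
    have h1 : (2 : ℤ) • w = (r + m) • b (Sum.inl 0) := by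
      apply RingOfIntegers.coe_injective
      rw [hb1]
      have h22 : algebraMap (𝓞 F) F 2 = 2 := map_ofNat _ 2
      simp [h22]
      linear_combination hm
    have h2 := congrArg (fun z => b.repr z (Sum.inr 0)) h1
    simp [hw, -zsmul_eq_mul] at h2
  · have h1 : Algebra.trace ℚ F (w : F) = r := by
      rw [← Algebra.coe_trace_int, htr]
    have h3 : Algebra.trace ℚ F (r : F) = 2 * r := by
      have := Algebra.trace_algebraMap (S := F) (r : ℚ)
      rw [h2] at this
      simpa using this
    have h4 : (2 : F) * w = (2 : ℤ) • (w : F) := by simp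
    rw [map_sub, h3, h4, map_zsmul, h1]; simp
  · intro y
    have := b.sum_repr y
    simp [hb1, ← hw] at this
    have := congrArg (fun z : 𝓞 F => (z : F)) this
    simp at this
    refine ⟨2 * b.repr y (Sum.inl 0) + r * b.repr y (Sum.inr 0), b.repr y (Sum.inr 0), ?_⟩
    rw [← this]; push_cast; ring

theorem main_alg (F K : Type*) [Field F] [NumberField F] [Field K] [NumberField K] [Algebra F K]
    (h2 : Module.finrank ℚ F = 2) (hK : Module.finrank F K = 2)
    (σ : K ≃ₐ[F] K) (hσ2 : ∀ x, σ (σ x) = x)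
    (hfix : ∀ x, σ x = x → ∃ y, algebraMap F K y = x)
    (hpos : ∀ β : K, σ β = -β → β ≠ 0 → Algebra.trace ℚ K (β^2) < 0) :
    ∃ (α : 𝓞 K) (m M : ℤ), (α : K) - σ α ≠ 0 ∧ discr F * m = 4 * discr K ∧ 0 < m ∧
      (M : ℚ) = - Algebra.trace ℚ K (((α : K) - σ α)^2) ∧ 3 * M^2 ≤ 4 * m := by
  have hFr : Module.finrank ℤ (𝓞 F) = 2 := by rw [RingOfIntegers.rank, h2]
  have hKr : Module.finrank ℤ (𝓞 K) = 2 + 2 := by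
    rw [RingOfIntegers.rank, ← Module.finrank_mul_finrank ℚ F K, h2, hK]
  let c : Module.Basis (Fin 2) ℤ (𝓞 F) := Module.finBasisOfFinrankEq ℤ (𝓞 F) hFr
  let f : 𝓞 F →ₗ[ℤ] 𝓞 K := (algebraMap (𝓞 F) (𝓞 K)).toIntAlgHom.toLinearMap
  have hfK : ∀ y : 𝓞 F, ((f y : 𝓞 K) : K) = algebraMap F K (y : F) := fun y => rfl
  have hf : Function.Injective f := by
    intro x y h
    have := congrArg (fun z : 𝓞 K => (z : K)) h
    simp only [hfK] at this
    exact RingOfIntegers.coe_injective ((algebraMap F K).injective this)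
  have hfixI : ∀ z : K, IsIntegral ℤ z → σ z = z → ∃ y : 𝓞 F, algebraMap F K (y : F) = z := by
    intro z hz hs
    obtain ⟨y, rfl⟩ := hfix z hs
    have : IsIntegral ℤ y := (isIntegral_algebraMap_iff (algebraMap F K).injective).mp hz
    exact ⟨⟨y, this⟩, rfl⟩
  have hσint : ∀ z : K, IsIntegral ℤ z → IsIntegral ℤ (σ z) := fun z hz =>
    hz.map (σ.toAlgHom.restrictScalars ℤ)
  obtain ⟨b, hb⟩ := ext_basis (LinearMap.range f) (by
    rintro n hn x ⟨m, hm⟩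
    have h1 := congrArg (fun z : 𝓞 K => (z : K)) hm
    simp only [hfK] at h1
    have hn' : (n : K) ≠ 0 := by exact_mod_cast hn
    have h3 : algebraMap F K (m : F) = (n : K) * x := by rw [h1]; simp
    have h4 : σ (x : K) = x := by
      have := congrArg σ h3
      rw [AlgEquiv.commutes, map_mul, map_intCast, h3] at this
      exact (mul_left_cancel₀ hn' this).symm
    obtain ⟨y, hy⟩ := hfixI _ x.2 h4
    exact ⟨y, RingOfIntegers.coe_injective hy⟩) (c.map (LinearEquiv.ofInjective f hf)) hKr
  have hb' : ∀ i, ((b (Sum.inl i) : 𝓞 K) : K) = algebraMap F K (c i : F) := by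
    intro i
    rw [hb i]
    simp [hfK]
  let e : Fin 2 ⊕ Fin 2 → K := fun i => (b i : K)
  have hD : (discr K : ℚ) = Algebra.discr ℚ e := by
    rw [← discr_eq_discr K b, Algebra.discr_def, Algebra.discr_def]
    change (Int.castRingHom ℚ) _ = _
    rw [RingHom.map_det]
    congr 1
    ext i j
    simp [Algebra.traceMatrix_apply, Algebra.traceForm_apply, Algebra.coe_trace_int, e]
  have hd : (discr F : ℚ) = Algebra.discr ℚ (fun i => (c i : F)) := by
    rw [← discr_eq_discr F c, Algebra.discr_def, Algebra.discr_def]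
    change (Int.castRingHom ℚ) _ = _
    rw [RingHom.map_det]
    congr 1
    ext i j
    simp [Algebra.traceMatrix_apply, Algebra.traceForm_apply, Algebra.coe_trace_int]
  -- antisymmetric parts
  let β : Fin 2 → K := fun j => e (Sum.inr j) - σ (e (Sum.inr j))
  have hβσ : ∀ j, σ (β j) = - β j := by intro j; simp [β, hσ2]
  have hβint : ∀ j, IsIntegral ℤ (β j) := fun j => (b (Sum.inr j)).2.sub (hσint _ (b (Sum.inr j)).2)
  have hX : ∀ j, ∃ y : 𝓞 F, algebraMap F K (y : F) = e (Sum.inr j) + σ (e (Sum.inr j)) := by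
    intro j
    apply hfixI
    · exact (b (Sum.inr j)).2.add (hσint _ (b (Sum.inr j)).2)
    · rw [map_add, hσ2, add_comm]
  choose X hX using hX
  let P : Matrix (Fin 2 ⊕ Fin 2) (Fin 2 ⊕ Fin 2) ℚ :=
    Matrix.fromBlocks 1 (Matrix.of fun i j => -((c.repr (X j) i : ℤ) : ℚ)) 0 ((2 : ℚ) • 1)
  have hP : P.det = 4 := by
    simp [P, Matrix.det_fromBlocks_zero₂₁]
    norm_num
  let b' : Fin 2 ⊕ Fin 2 → K := Sum.elim (fun i => algebraMap F K (c i : F)) β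
  have hbP : Matrix.vecMul e (P.map (algebraMap ℚ K)) = b' := by
    ext k
    rcases k with k | k
    · simp [Matrix.vecMul, dotProduct, P, b', e, hb', Matrix.one_apply]
      fin_cases k <;> simp
    · have h1 := congrArg (fun z : 𝓞 F => algebraMap F K (z : F)) (c.sum_repr (X k))
      simp [hX] at h1
      simp [Matrix.vecMul, dotProduct, P, b', β, hb', Matrix.one_apply, e]
      have h3 : ∀ k' : Fin 2, k' = k → e (Sum.inr k') = e (Sum.inr k) := by rintro _ rfl; rfl
      simp only [e] at h1
      fin_cases k <;> simp at h1 ⊢ <;> linear_combination -h1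
  have hdisc := Algebra.discr_of_matrix_vecMul e P
  rw [hbP, hP, ← hD] at hdisc
  let T : Matrix (Fin 2) (Fin 2) ℚ := Algebra.traceMatrix ℚ (fun i => (c i : F))
  let N : Matrix (Fin 2) (Fin 2) ℚ := Algebra.traceMatrix ℚ β
  have hzero : ∀ z : K, σ z = -z → Algebra.trace ℚ K z = 0 := by
    intro z hz
    have := Algebra.trace_eq_of_algEquiv (σ.restrictScalars ℚ) z
    simp only [AlgEquiv.restrictScalars_apply, hz, map_neg] at this
    linarith
  have htrF : ∀ y : F, Algebra.trace ℚ K (algebraMap F K y) = 2 * Algebra.trace ℚ F y := by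
    intro y
    rw [← Algebra.trace_trace (S := F), Algebra.trace_algebraMap, hK, map_nsmul]; simp
  have hblock : Algebra.traceMatrix ℚ b' = Matrix.fromBlocks ((2 : ℚ) • T) 0 0 N := by
    ext i j
    rcases i with i | i <;> rcases j with j | j
    · simp only [Algebra.traceMatrix_apply, Algebra.traceForm_apply, b', Sum.elim_inl, Matrix.fromBlocks_apply₁₁,
        Matrix.smul_apply, T, smul_eq_mul]
      rw [← map_mul, htrF]
    · simp only [Algebra.traceMatrix_apply, Algebra.traceForm_apply, b', Sum.elim_inl, Sum.elim_inr, Matrix.fromBlocks_apply₁₂, Matrix.zero_apply]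
      apply hzero
      rw [map_mul, hβσ, AlgEquiv.commutes]; ring
    · simp only [Algebra.traceMatrix_apply, Algebra.traceForm_apply, b', Sum.elim_inl, Sum.elim_inr, Matrix.fromBlocks_apply₂₁, Matrix.zero_apply]
      apply hzero
      rw [map_mul, hβσ, AlgEquiv.commutes]; ring
    · rfl
  rw [Algebra.discr_def, hblock, Matrix.det_fromBlocks_zero₂₁, Matrix.det_smul] at hdisc
  have hTd : T.det = discr F := by rw [hd]; rfl
  rw [hTd] at hdisc
  simp only [Fintype.card_fin] at hdisc
  -- integrality
  let βI : Fin 2 → 𝓞 K := fun j => ⟨β j, hβint j⟩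
  let mm : Fin 2 → Fin 2 → ℤ := fun j k => - Algebra.trace ℤ (𝓞 K) (βI j * βI k)
  have hmm : ∀ j k, ((mm j k : ℤ) : ℚ) = - Algebra.trace ℚ K (β j * β k) := by
    intro j k
    simp only [mm, Int.cast_neg, Algebra.coe_trace_int]
    rfl
  have hN : N.det = mm 0 0 * mm 1 1 - mm 0 1 ^ 2 := by
    rw [Matrix.det_fin_two]
    simp only [N, Algebra.traceMatrix_apply, Algebra.traceForm_apply, hmm]
    rw [mul_comm (β 1) (β 0)]; ring
  have hval : ∀ s t : ℤ, ((mm 0 0 * s^2 + (2 * mm 0 1) * s * t + mm 1 1 * t^2 : ℤ) : ℚ) =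
      - Algebra.trace ℚ K ((s * β 0 + t * β 1)^2) := by
    intro s t
    have : (s * β 0 + t * β 1)^2 = (s^2 : ℤ) • (β 0 * β 0) + (2 * s * t : ℤ) • (β 0 * β 1) + (t^2 : ℤ) • (β 1 * β 1) := by
      simp only [zsmul_eq_mul]; push_cast; ring
    rw [this]
    simp only [map_add, map_zsmul]
    push_cast
    rw [hmm, hmm, hmm]
    simp only [zsmul_eq_mul]
    push_cast
    ring
  have hne : ∀ s t : ℤ, ¬ (s = 0 ∧ t = 0) → (s * β 0 + t * β 1) ≠ 0 := by
    intro s t hst h0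
    -- s a0 + t a1 is fixed
    set z : 𝓞 K := s • b (Sum.inr 0) + t • b (Sum.inr 1) with hz
    have hzK : (z : K) = s * e (Sum.inr 0) + t * e (Sum.inr 1) := by
      simp [hz, e]
    have hs : σ (z : K) = z := by
      rw [hzK]
      simp only [map_add, map_mul, map_intCast]
      simp only [β] at h0
      linear_combination -h0
    obtain ⟨y, hy⟩ := hfixI _ z.2 hs
    have hy' : f y = z := RingOfIntegers.coe_injective hy
    have h5 : z = ∑ i, c.repr y i • b (Sum.inl i) := by
      rw [← hy']
      conv_lhs => rw [← c.sum_repr y]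
      rw [map_sum]
      refine Finset.sum_congr rfl fun i _ => ?_
      rw [map_smul]
      congr 1
      exact RingOfIntegers.coe_injective (hb' i).symm
    apply hst
    constructor
    · have := congrArg (fun z => b.repr z (Sum.inr 0)) h5
      simpa [hz, -zsmul_eq_mul] using this
    · have := congrArg (fun z => b.repr z (Sum.inr 1)) h5
      simpa [hz, -zsmul_eq_mul] using this
  have hanti : ∀ s t : ℤ, σ (s * β 0 + t * β 1) = -(s * β 0 + t * β 1) := by
    intro s t; simp only [map_add, map_mul, map_intCast, hβσ]; ring
  have hposv : ∀ s t : ℤ, ¬ (s = 0 ∧ t = 0) → 0 < mm 0 0 * s^2 + (2 * mm 0 1) * s * t + mm 1 1 * t^2 := by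
    intro s t hst
    have := hpos _ (hanti s t) (hne s t hst)
    have h := hval s t
    have : (0 : ℚ) < ((mm 0 0 * s^2 + (2 * mm 0 1) * s * t + mm 1 1 * t^2 : ℤ) : ℚ) := by rw [h]; linarith
    exact_mod_cast this
  have hA : 0 < mm 0 0 := by simpa using hposv 1 0 (by simp)
  have hm : 0 < mm 0 0 * mm 1 1 - mm 0 1 ^ 2 := by
    have := hposv (-mm 0 1) (mm 0 0) (by omega)
    have h3 : 0 < mm 0 0 * (mm 0 0 * mm 1 1 - mm 0 1 ^ 2) := by linarith
    exact pos_of_mul_pos_right h3 hA.le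
  obtain ⟨s, t, hst, hle⟩ := red_form _ (mm 0 0) (2 * mm 0 1) (mm 1 1) le_rfl hA (by linarith)
  refine ⟨s • b (Sum.inr 0) + t • b (Sum.inr 1), mm 0 0 * mm 1 1 - mm 0 1 ^ 2,
    mm 0 0 * s^2 + (2 * mm 0 1) * s * t + mm 1 1 * t^2, ?_, ?_, hm, ?_, by linarith⟩
  · have := hne s t hst
    convert this using 1
    simp [β, e]; ring
  · rw [hN] at hdisc
    have : ((discr F * (mm 0 0 * mm 1 1 - mm 0 1 ^ 2) : ℤ) : ℚ) = ((4 * discr K : ℤ) : ℚ) := by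
      push_cast
      linarith
    exact_mod_cast this
  · rw [hval]
    congr 3
    simp [β, e]; ring

noncomputable def GG (t : Σ _ : ℕ, Σ _ : ℕ, ℤ) : Subfield ℂ :=
  Subfield.closure {((√(t.1 : ℝ) : ℝ) : ℂ), Complex.I * ((√(((t.2.1 : ℝ) + t.2.2 * √(t.1 : ℝ)) / 2) : ℝ) : ℂ)}

theorem mem_TT (B d u : ℕ) (v : ℤ) (h5 : 5 ≤ d) (h4 : d % 4 = 0 ∨ d % 4 = 1) (hd : d * d ≤ B)
    (hu : 1 ≤ u) (hu2 : 3 * u^2 * d ≤ 4 * B) (hv : v^2 * d ≤ (u:ℤ)^2) :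
    (⟨d, u, v⟩ : Σ _ : ℕ, Σ _ : ℕ, ℤ) ∈ TT B := by
  unfold TT
  simp only [Finset.mem_sigma, Finset.mem_filter, Finset.mem_Icc]
  have hw : v.natAbs ≤ Nat.sqrt (u^2/d) := by
    rw [Nat.le_sqrt, Nat.le_div_iff_mul_le (by omega)]
    zify
    rw [← sq, sq_abs]; exact hv
  refine ⟨⟨⟨h5, Nat.le_sqrt.mpr hd⟩, h4⟩, ⟨hu, ?_⟩, by omega, by omega⟩
  rw [Nat.le_sqrt, Nat.le_div_iff_mul_le (by omega)]
  nlinarith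

theorem field_param (K : Subfield ℂ) [NumberField K] (h4 : Module.finrank ℚ K = 4)
    (hc : ∀ φ : K →+* ℂ, ¬ ComplexEmbedding.IsReal φ)
    (σ : K ≃+* K) (hσ : ∀ (φ : K →+* ℂ) (x : K), φ (σ x) = (starRingEnd ℂ) (φ x))
    (B : ℕ) (hB : |discr K| ≤ (B : ℤ)) : ∃ t ∈ TT B, GG t = K := by
  have hσC : ∀ x : K, ((σ x : K) : ℂ) = (starRingEnd ℂ) (x : ℂ) := fun x => hσ K.subtype x
  have hσσ : ∀ x, σ (σ x) = x := by
    intro x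
    apply Subtype.ext
    rw [hσC, hσC, Complex.conj_conj]
  let σ' : K ≃ₐ[ℚ] K := AlgEquiv.ofRingEquiv (f := σ) (fun _ => by simp)
  have hσ' : ∀ x, σ' x = σ x := fun _ => rfl
  let H := Subgroup.zpowers σ'
  let F : IntermediateField ℚ K := IntermediateField.fixedField H
  have hcard : Nat.card H = 2 := by
    rw [Nat.card_zpowers]
    apply orderOf_eq_prime
    · ext x
      rw [sq, AlgEquiv.mul_apply, hσ', hσ', hσσ]; rfl
    · intro h1
      apply hc K.subtype
      rw [ComplexEmbedding.isReal_iff]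
      ext x
      rw [ComplexEmbedding.conjugate_coe_eq, ← hσ, ← hσ', h1]; rfl
  have hFK : Module.finrank F K = 2 := by
    rw [← hcard]; exact IntermediateField.finrank_fixedField_eq_card H
  have hF2 : Module.finrank ℚ F = 2 := by
    have := Module.finrank_mul_finrank ℚ F K
    rw [h4, hFK] at this; omega
  have hFmem : ∀ x : K, x ∈ F ↔ σ x = x := by
    intro x
    rw [IntermediateField.mem_fixedField_iff]
    constructor
    · intro h; exact h σ' (Subgroup.mem_zpowers σ')
    · intro h g hg
      have : H ≤ MulAction.stabilizer (K ≃ₐ[ℚ] K) x := by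
        rw [Subgroup.zpowers_le, MulAction.mem_stabilizer_iff]; exact h
      exact this hg
  let τ : K ≃ₐ[F] K := AlgEquiv.ofRingEquiv (f := σ) (fun y => (hFmem _).mp y.2)
  have hτ : ∀ x, τ x = σ x := fun _ => rfl
  -- positivity
  have hemb : ∀ (φ : K →+* ℂ) (β : K), σ β = -β → β ≠ 0 →
      ∃ s : ℝ, 0 < s ∧ φ (β^2) = ((-s : ℝ) : ℂ) := by
    intro φ β h1 h0
    have h := hσ φ β
    rw [h1, map_neg] at h
    have hre : (φ β).re = 0 := by
      have := congrArg Complex.re h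
      simp at this
      linarith
    have hne : φ β ≠ 0 := by simpa using h0
    have him : (φ β).im ≠ 0 := fun h' => hne (Complex.ext hre h')
    refine ⟨(φ β).im^2, by positivity, ?_⟩
    rw [map_pow]
    apply Complex.ext
    · rw [sq, Complex.mul_re, Complex.ofReal_re, hre]; ring
    · rw [sq, Complex.mul_im, Complex.ofReal_im, hre]; ring
  have hpos : ∀ β : K, τ β = -β → β ≠ 0 → Algebra.trace ℚ K (β^2) < 0 := by
    intro β h1 h0
    have h := trace_eq_sum_embeddings (K := ℚ) (L := K) ℂ (x := β^2)
    have h' := congrArg Complex.re h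
    rw [Complex.re_sum] at h'
    have hneg : ∑ φ : K →ₐ[ℚ] ℂ, (φ (β^2)).re < 0 := by
      apply Finset.sum_neg
      · intro φ _
        obtain ⟨s, hs, hh⟩ := hemb φ.toRingHom β h1 h0
        have hh' : φ (β^2) = ((-s : ℝ) : ℂ) := hh
        rw [hh', Complex.ofReal_re]; linarith
      · exact ⟨K.subtype.toRatAlgHom, Finset.mem_univ _⟩
    rw [← h'] at hneg
    simp at hneg
    exact_mod_cast hneg
  obtain ⟨x, p, r, hdpr, hx2, hxint, hxtr, hxspan⟩ := quad2 F hF2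
  have hxspan' : ∀ z : K, IsIntegral ℤ z → σ z = z → ∃ (y : 𝓞 F) (u v : ℤ), ((y : F) : K) = z ∧ 2 * (y : F) = u + v * x := by
    intro z hz hs
    have hzF := (hFmem z).mpr hs
    have : IsIntegral ℤ (⟨z, hzF⟩ : F) :=
      (isIntegral_algebraMap_iff (B := K) (algebraMap F K).injective).mp hz
    obtain ⟨u, v, huv⟩ := hxspan ⟨⟨z, hzF⟩, this⟩
    exact ⟨⟨⟨z, hzF⟩, this⟩, u, v, rfl, huv⟩
  obtain ⟨α, m, M, hβ0, hdm, hm, hM, hM2⟩ := main_alg F K hF2 hFK τ hσσ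
    (fun z hz => ⟨⟨z, (hFmem z).mpr hz⟩, rfl⟩) hpos
  set β : K := (α : K) - τ α with hβ
  have hβσ : σ β = -β := by rw [hβ, hτ, map_sub, hσσ]; ring
  have hβint : IsIntegral ℤ β := α.2.sub (α.2.map (τ.toAlgHom.restrictScalars ℤ))
  obtain ⟨y, u, v, hy, huv⟩ := hxspan' (-β^2) (hβint.pow 2).neg (by rw [map_neg, map_pow, hβσ]; ring)
  have huvK : 2 * (-β^2) = (u : K) + v * (x : K) := by
    have h := congrArg (algebraMap F K) huv
    simp only [map_mul, map_add, map_intCast, map_ofNat] at h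
    rw [← hy]; exact h
  have htrF : ∀ y : F, Algebra.trace ℚ K (y : K) = 2 * Algebra.trace ℚ F y := by
    intro y
    have h := Algebra.trace_algebraMap (S := K) y
    rw [hFK] at h
    have h3 := Algebra.trace_trace (R := ℚ) (S := F) (algebraMap F K y)
    rw [h, map_nsmul] at h3
    rw [nsmul_eq_mul] at h3; exact_mod_cast h3.symm
  have hMu : M = 2 * u := by
    have e1 : (M : ℚ) = 2 * Algebra.trace ℚ F (y : F) := by
      rw [hM, ← htrF, hy, map_neg]
    have e2 := congrArg (Algebra.trace ℚ F) huv
    have e3 : Algebra.trace ℚ F (u : F) = 2 * u := by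
      have := Algebra.trace_algebraMap (S := F) (u : ℚ)
      rw [hF2] at this
      simpa using this
    rw [map_add, e3, ← zsmul_eq_mul, map_zsmul, hxtr, smul_zero, add_zero,
      show (2 : F) * (y : F) = (2 : ℤ) • (y : F) by simp, map_zsmul] at e2
    have : (M : ℚ) = ((2 * u : ℤ) : ℚ) := by
      push_cast
      rw [e1, ← e2]; simp
    exact_mod_cast this
  have hMpos : 0 < M := by
    have := hpos β hβσ hβ0
    have : (0 : ℚ) < M := by rw [hM]; linarith
    exact_mod_cast this
  have hu : 0 < u := by omega
  -- real generator
  set d := discr F with hd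
  set X : ℝ := ((x : K) : ℂ).re with hX
  have hXC : ((x : K) : ℂ) = (X : ℂ) := by
    have h := hσC (x : K)
    rw [(hFmem _).mp x.2] at h
    exact (Complex.conj_eq_iff_re.mp h.symm).symm
  have hx2K : ((x : K))^2 = (d : K) := by exact_mod_cast congrArg (fun z : F => (z : K)) hx2
  have hX2 : X^2 = (d : ℝ) := by
    have h : ((x : K) : ℂ)^2 = (d : ℂ) := by exact_mod_cast congrArg (fun z : K => (z : ℂ)) hx2K
    rw [hXC] at h
    exact_mod_cast h
  have hXint : ∀ m : ℤ, X ≠ m := by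
    intro m hm
    apply hxint m
    apply Subtype.ext
    apply Subtype.ext
    rw [hXC, hm]; simp
  have hX0 : X ≠ 0 := by simpa using hXint 0
  have hdpos : 0 < d := by
    have : (0 : ℝ) < d := by rw [← hX2]; positivity
    exact_mod_cast this
  have hd4 : d % 4 = 0 ∨ d % 4 = 1 := by
    rw [hdpr]
    rcases Int.even_or_odd' r with ⟨k, rfl | rfl⟩
    · left; ring_nf; omega
    · right; ring_nf; omega
  have hdsq : ∀ k : ℤ, d ≠ k^2 := by
    intro k hk
    have : X^2 = (k : ℝ)^2 := by rw [hX2, hk]; push_cast; ring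
    rcases sq_eq_sq_iff_eq_or_eq_neg.mp this with h | h
    · exact hXint k h
    · exact hXint (-k) (by push_cast; exact h)
  have hd5 : 5 ≤ d := by
    have h1 := hdsq 1
    have h2 := hdsq 2
    omega
  have hdd : d * d ≤ B := by
    have h := natAbs_discr_eq_absNorm_differentIdeal_mul_natAbs_discr_pow F (𝓞 F) K (𝓞 K)
    rw [hFK] at h
    have h0 : (discr K).natAbs ≠ 0 := by simpa using discr_ne_zero K
    have h1 : Ideal.absNorm (differentIdeal (𝓞 F) (𝓞 K)) ≠ 0 := by
      intro h'; rw [h', zero_mul] at h; exact h0 h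
    have h2 : d.natAbs ^ 2 ≤ (discr K).natAbs := by
      rw [h]; exact Nat.le_mul_of_pos_left _ (Nat.pos_of_ne_zero h1)
    have h3 : ((d.natAbs ^ 2 : ℕ) : ℤ) ≤ ((discr K).natAbs : ℤ) := by exact_mod_cast h2
    push_cast at h3
    rw [sq_abs] at h3
    linarith
  have hu3 : 3 * u^2 * d ≤ 4 * B := by
    have h1 : 3 * u^2 ≤ m := by rw [hMu] at hM2; linarith
    have h2 : 3 * u^2 * d ≤ m * d := by nlinarith
    have h3 := le_abs_self (discr K)
    linarith
  -- embeddings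
  have hval : ∀ (φ : K →+* ℂ) (s : ℝ), φ (x : K) = (s : ℂ) → 0 < (u : ℝ) + v * s := by
    intro φ s hs
    obtain ⟨q, hq, hq2⟩ := hemb φ β hβσ hβ0
    have h := congrArg φ huvK
    simp only [map_mul, map_neg, map_add, map_intCast, map_ofNat, hq2, hs] at h
    have h' : 2 * (- (-q)) = (u : ℝ) + v * s := by exact_mod_cast h
    linarith
  have hp1 : 0 < (u : ℝ) + v * X := hval K.subtype X hXC
  have hp2 : 0 < (u : ℝ) + v * (-X) := by
    by_contra hcon
    have hall : ∀ φ : K →ₐ[ℚ] ℂ, φ (x : K) = (X : ℂ) := by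
      intro φ
      have h := congrArg φ hx2K
      rw [map_pow, map_intCast] at h
      have h' : (φ (x : K))^2 = (X : ℂ)^2 := by
        rw [h]; exact_mod_cast hX2.symm
      rcases sq_eq_sq_iff_eq_or_eq_neg.mp h' with h3 | h3
      · exact h3
      · exact absurd (hval φ.toRingHom (-X) (by push_cast; exact h3)) hcon
    have h := trace_eq_sum_embeddings (K := ℚ) (L := K) ℂ (x := (x : K))
    rw [htrF, hxtr, Finset.sum_congr rfl (fun φ _ => hall φ), Finset.sum_const] at h
    simp only [mul_zero, map_zero, nsmul_eq_mul] at h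
    rcases mul_eq_zero.mp h.symm with h | h
    · have : Nonempty (K →ₐ[ℚ] ℂ) := ⟨K.subtype.toRatAlgHom⟩
      have h3 : Finset.univ.card (α := K →ₐ[ℚ] ℂ) = 0 := by exact_mod_cast h
      simp at h3
      omega
    · exact hX0 (by exact_mod_cast h)
  have hv : v^2 * d ≤ u^2 := by
    have h := mul_pos hp1 hp2
    have h' : (0 : ℝ) < u^2 - v^2 * X^2 := by linarith
    rw [hX2] at h'
    have : (v : ℝ)^2 * d ≤ u^2 := by linarith
    exact_mod_cast this
  -- the imaginary generator
  set b : ℝ := (β : ℂ).im with hb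
  have hβC : (β : ℂ) = Complex.I * (b : ℂ) := by
    have h := hσC β
    rw [hβσ] at h
    have h1 := congrArg Complex.re h
    simp at h1
    apply Complex.ext
    · simp; linarith
    · simp [hb]
  have hb2 : b^2 = ((u : ℝ) + v * X) / 2 := by
    have h : 2 * (-(β : ℂ)^2) = (u : ℂ) + v * ((x : K) : ℂ) := by
      have h0 := congrArg K.subtype huvK
      simp only [map_mul, map_neg, map_pow, map_add, map_intCast, map_ofNat] at h0
      exact h0
    rw [hβC, hXC, mul_pow, Complex.I_sq] at h
    have h' : 2 * (-(-1 * b^2)) = (u : ℝ) + v * X := by exact_mod_cast h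
    linarith
  -- sign normalisation
  obtain ⟨v', hv'2, hv'X⟩ : ∃ v' : ℤ, v'^2 = v^2 ∧ (v' : ℝ) * |X| = v * X := by
    rcases abs_choice X with h | h
    · exact ⟨v, rfl, by rw [h]⟩
    · exact ⟨-v, by ring, by rw [h]; push_cast; ring⟩
  have hsd : √((d.toNat : ℕ) : ℝ) = |X| := by
    rw [← Real.sqrt_sq_eq_abs, hX2]
    congr 1
    have : ((d.toNat : ℕ) : ℤ) = d := Int.toNat_of_nonneg hdpos.le
    exact_mod_cast this
  have hut : ((u.toNat : ℕ) : ℤ) = u := Int.toNat_of_nonneg hu.le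
  have hdt : ((d.toNat : ℕ) : ℤ) = d := Int.toNat_of_nonneg hdpos.le
  have hutR : ((u.toNat : ℕ) : ℝ) = u := by exact_mod_cast hut
  refine ⟨⟨d.toNat, u.toNat, v'⟩, mem_TT B _ _ _ (by omega) (by omega) ?_ (by omega) ?_ ?_, ?_⟩
  · zify; rw [hdt]; exact hdd
  · zify; rw [hdt, hut]; exact hu3
  · rw [hdt, hut, hv'2]; exact hv
  unfold GG
  simp only [hsd, hutR, hv'X]
  rw [← hb2, Real.sqrt_sq_eq_abs]
  have hneg : ∀ (L : Subfield ℂ) (s : ℝ), ((|s| : ℝ) : ℂ) ∈ L ↔ (s : ℂ) ∈ L := by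
    intro L s
    rcases abs_choice s with h | h
    · rw [h]
    · rw [h]; push_cast; exact neg_mem_iff
  have hnegI : ∀ (L : Subfield ℂ) (s : ℝ), Complex.I * ((|s| : ℝ) : ℂ) ∈ L ↔ Complex.I * (s : ℂ) ∈ L := by
    intro L s
    rcases abs_choice s with h | h
    · rw [h]
    · rw [h]; push_cast; rw [mul_neg]; exact neg_mem_iff
  apply le_antisymm
  · rw [Subfield.closure_le]
    rintro z (rfl | rfl)
    · exact (hneg K X).mpr (hXC ▸ (x : K).2)
    · exact (hnegI K b).mpr (hβC ▸ β.2)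
  · set L := Subfield.closure {((|X| : ℝ) : ℂ), Complex.I * ((|b| : ℝ) : ℂ)} with hL
    have hxL : ((x : K) : ℂ) ∈ L := by
      rw [hXC, ← hneg]; exact Subfield.subset_closure (by simp)
    have hβL : (β : ℂ) ∈ L := by
      rw [hβC, ← hnegI]; exact Subfield.subset_closure (by simp)
    have hint : ∀ n : ℤ, (n : ℂ) ∈ L := fun n => intCast_mem L n
    have hFL : ∀ z : K, σ z = z → (z : ℂ) ∈ L := by
      intro z hz
      obtain ⟨n, hn, hzn⟩ := IsAlgebraic.exists_integral_multiple (R := ℤ) (A := K) (show IsAlgebraic ℤ z from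
        (IsFractionRing.isAlgebraic_iff ℤ ℚ K).mpr (Algebra.IsAlgebraic.isAlgebraic z))
      obtain ⟨y, u, v, hy, huv⟩ := hxspan' (n • z) hzn (by rw [map_zsmul, hz])
      have h1 : 2 * (n • z) = (u : K) + v * (x : K) := by
        have h := congrArg (algebraMap F K) huv
        simp only [map_mul, map_add, map_intCast, map_ofNat] at h
        rw [← hy]; exact h
      have h2 : 2 * ((n : ℂ) * (z : ℂ)) = (u : ℂ) + v * ((x : K) : ℂ) := by
        have h0 := congrArg K.subtype h1
        simp only [zsmul_eq_mul, map_mul, map_add, map_intCast, map_ofNat] at h0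
        exact h0
      have hn' : (n : ℂ) ≠ 0 := by exact_mod_cast hn
      have h3 : (z : ℂ) = ((u : ℂ) + v * ((x : K) : ℂ)) / (2 * n) := by
        rw [← h2]; field_simp
      rw [h3]
      refine div_mem (add_mem (hint u) (mul_mem (hint v) hxL)) (mul_mem ?_ (hint n))
      exact_mod_cast hint 2
    intro z hz
    set w : K := ⟨z, hz⟩ with hw
    have h1 : ((w + σ w : K) : ℂ) ∈ L := hFL _ (by rw [map_add, hσσ, add_comm])
    have h2 : (((w - σ w) * β : K) : ℂ) ∈ L := hFL _ (by rw [map_mul, map_sub, hσσ, hβσ]; ring)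
    have hβ0' : (β : ℂ) ≠ 0 := by simpa using hβ0
    have h3 : z = (((w + σ w : K) : ℂ) + (((w - σ w) * β : K) : ℂ) / (β : ℂ)) / 2 := by
      push_cast
      have : (w : ℂ) = z := rfl
      rw [this]
      field_simp
      ring
    rw [h3]
    refine div_mem (add_mem h1 (div_mem h2 hβL)) ?_
    exact_mod_cast hint 2

/-- Proposition 4.5: there is `B₀ > 0` such that for every `B ≥ B₀`, any
collection of pairwise non-isomorphic quartic CM-subfields of `ℂ` with absolute discriminant
at most `B` has at most `B` elements. -/
theorem stmt11 :
    ∃ B₀ : ℕ, 0 < B₀ ∧ ∀ B : ℕ, B₀ ≤ B → ∀ S : Set (Subfield ℂ),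
      (∀ K ∈ S, ∃ hNF : NumberField K,
        Module.finrank ℚ K = 4 ∧
        (∀ φ : K →+* ℂ, ¬ ComplexEmbedding.IsReal φ) ∧
        (∃ σ : K ≃+* K, ∀ (φ : K →+* ℂ) (x : K), φ (σ x) = (starRingEnd ℂ) (φ x)) ∧
        |@NumberField.discr K _ hNF| ≤ (B : ℤ)) →
      (∀ K ∈ S, ∀ L ∈ S, K ≠ L → IsEmpty (K ≃+* L)) →
      S.Finite ∧ S.ncard ≤ B := by
  refine ⟨10^6, by norm_num, fun B hB S hS _ => ?_⟩
  classical
  have hsub : S ⊆ ((TT B).image GG : Finset (Subfield ℂ)) := by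
    intro K hK
    obtain ⟨hNF, h4, hc, ⟨σ, hσ⟩, hD⟩ := hS K hK
    obtain ⟨t, ht, rfl⟩ := field_param K h4 hc σ hσ B hD
    exact Finset.mem_coe.mpr (Finset.mem_image_of_mem _ ht)
  refine ⟨(Finset.finite_toSet _).subset hsub, ?_⟩
  calc S.ncard ≤ (((TT B).image GG : Finset (Subfield ℂ)) : Set (Subfield ℂ)).ncard :=
        Set.ncard_le_ncard hsub (Finset.finite_toSet _)
    _ = ((TT B).image GG).card := Set.ncard_coe_finset _
    _ ≤ (TT B).card := Finset.card_image_le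
    _ ≤ B := TT_card B hB
end

section
/- Let k be a field of characteristic neither 2 nor 3, and let a, b, c, d ∈ k satisfy 12ac + 16bd = 1. Set Δ₁ = a³ + b² and Δ₂ = c³ + d². Then the cubic polynomial f₁ = x³ + 12(2a²d - bc)x² + 12(16ad² + 3c²)Δ₁·x + 512·Δ₁²·d³ has discriminant -2²·3³·Δ₁²·Δ₂, and the cubic polynomial f₂ = x³ + 12(2bc² - ad)x² + 12(16b²c + 3a²)Δ₂·x + 512·Δ₂²·b³ has discriminant -2²·3³·Δ₁·Δ₂². -/
theorem aux12 {k : Type*} [Field k] (a b c d : k) (h : 12 * a * c + 16 * b * d = 1) :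
    18 * (12 * (2 * a ^ 2 * d - b * c)) * (12 * (16 * a * d ^ 2 + 3 * c ^ 2) * (a ^ 3 + b ^ 2)) * (512 * (a ^ 3 + b ^ 2) ^ 2 * d ^ 3)
      - 4 * (12 * (2 * a ^ 2 * d - b * c)) ^ 3 * (512 * (a ^ 3 + b ^ 2) ^ 2 * d ^ 3)
      + (12 * (2 * a ^ 2 * d - b * c)) ^ 2 * (12 * (16 * a * d ^ 2 + 3 * c ^ 2) * (a ^ 3 + b ^ 2)) ^ 2
      - 4 * (12 * (16 * a * d ^ 2 + 3 * c ^ 2) * (a ^ 3 + b ^ 2)) ^ 3 - 27 * (512 * (a ^ 3 + b ^ 2) ^ 2 * d ^ 3) ^ 2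
      = -(2 ^ 2 * 3 ^ 3) * (a ^ 3 + b ^ 2) ^ 2 * (c ^ 3 + d ^ 2) := by
  linear_combination (a ^ 3 + b ^ 2) ^ 2 * ((-186624)*a^3*c^3*d^2 + (-746496)*a^2*b^1*c^2*d^3 + (-15552)*a^2*c^5 + (-15552)*a^2*c^2*d^2 + (-995328)*a^1*b^2*c^1*d^4 + (-41472)*a^1*b^1*c^4*d^1 + (-41472)*a^1*b^1*c^1*d^3 + (-1296)*a^1*c^4 + (-1296)*a^1*c^1*d^2 + (-442368)*b^3*d^5 + (-27648)*b^2*c^3*d^2 + (-27648)*b^2*d^4 + (-1728)*b^1*c^3*d^1 + (-1728)*b^1*d^3 + (-108)*c^3 + (-108)*d^2) * h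

/-- discriminant computation of Lemma A.1: over a field of characteristic
neither `2` nor `3`, with `12ac + 16bd = 1`, `Δ₁ = a³ + b²`, `Δ₂ = c³ + d²`, the monic cubic
`f₁ = x³ + 12(2a²d - bc)x² + 12(16ad² + 3c²)Δ₁ x + 512Δ₁²d³` has discriminant
`-2²·3³·Δ₁²·Δ₂`, and `f₂ = x³ + 12(2bc² - ad)x² + 12(16b²c + 3a²)Δ₂ x + 512Δ₂²b³` has
discriminant `-2²·3³·Δ₁·Δ₂²`, where the discriminant of `x³ + px² + qx + r` is
`18pqr - 4p³r + p²q² - 4q³ - 27r²`. -/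
theorem stmt12 (k : Type*) [Field k] (h2 : (2 : k) ≠ 0) (h3 : (3 : k) ≠ 0)
    (a b c d : k) (habcd : 12 * a * c + 16 * b * d = 1) :
    (let Δ₁ := a ^ 3 + b ^ 2
     let Δ₂ := c ^ 3 + d ^ 2
     let p₁ := 12 * (2 * a ^ 2 * d - b * c)
     let q₁ := 12 * (16 * a * d ^ 2 + 3 * c ^ 2) * Δ₁
     let r₁ := 512 * Δ₁ ^ 2 * d ^ 3
     let p₂ := 12 * (2 * b * c ^ 2 - a * d)
     let q₂ := 12 * (16 * b ^ 2 * c + 3 * a ^ 2) * Δ₂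
     let r₂ := 512 * Δ₂ ^ 2 * b ^ 3
     18 * p₁ * q₁ * r₁ - 4 * p₁ ^ 3 * r₁ + p₁ ^ 2 * q₁ ^ 2 - 4 * q₁ ^ 3 - 27 * r₁ ^ 2
        = -(2 ^ 2 * 3 ^ 3) * Δ₁ ^ 2 * Δ₂ ∧
     18 * p₂ * q₂ * r₂ - 4 * p₂ ^ 3 * r₂ + p₂ ^ 2 * q₂ ^ 2 - 4 * q₂ ^ 3 - 27 * r₂ ^ 2
        = -(2 ^ 2 * 3 ^ 3) * Δ₁ * Δ₂ ^ 2) := by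
  exact ⟨aux12 a b c d habcd, by
    have h := aux12 c d a b (by linear_combination habcd)
    linear_combination h⟩
end

section
/- Let k be a field of characteristic neither 2 nor 3, and let a, b, c, d, t ∈ k satisfy 12ac + 16bd = 1, Δ₁ := a³ + b² ≠ 0, Δ₂ := c³ + d² ≠ 0, and t ≠ 0. Define f = (x³ + 3ax + 2b)(2dx³ + 3cx² + 1) and f₁ = X³ + 12(2a²d - bc)X² + 12(16ad² + 3c²)Δ₁·X + 512·Δ₁²·d³. Then for all x, y ∈ k with t·y² = f(x) and x³ + 3ax + 2b ≠ 0, setting u₁ = 12Δ₁·(-2dx + c)/(x³ + 3ax + 2b) and v₁ = Δ₁·(16dx³ - 12cx² - 1)/(x³ + 3ax + 2b)², one has t·(y·v₁)² = f₁(u₁). -/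
/-- first map identity of Lemma A.1: on the genus-2 curve
`t·y² = (x³ + 3ax + 2b)(2dx³ + 3cx² + 1)`, the map `(x, y) ↦ (u₁, y·v₁)` lands on the
elliptic curve `t·Y² = X³ + 12(2a²d - bc)X² + 12(16ad² + 3c²)Δ₁·X + 512·Δ₁²·d³`. -/
theorem stmt13 (k : Type*) [Field k] (h2 : (2 : k) ≠ 0) (h3 : (3 : k) ≠ 0)
    (a b c d t : k) (habcd : 12 * a * c + 16 * b * d = 1)
    (hΔ₁ : a ^ 3 + b ^ 2 ≠ 0) (hΔ₂ : c ^ 3 + d ^ 2 ≠ 0) (ht : t ≠ 0)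
    (x y : k)
    (hxy : t * y ^ 2 = (x ^ 3 + 3 * a * x + 2 * b) * (2 * d * x ^ 3 + 3 * c * x ^ 2 + 1))
    (hden : x ^ 3 + 3 * a * x + 2 * b ≠ 0) :
    (let Δ₁ := a ^ 3 + b ^ 2
     let u₁ := 12 * Δ₁ * (-(2 * d * x) + c) / (x ^ 3 + 3 * a * x + 2 * b)
     let v₁ := Δ₁ * (16 * d * x ^ 3 - 12 * c * x ^ 2 - 1) / (x ^ 3 + 3 * a * x + 2 * b) ^ 2
     t * (y * v₁) ^ 2 =
       u₁ ^ 3 + 12 * (2 * a ^ 2 * d - b * c) * u₁ ^ 2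
         + 12 * (16 * a * d ^ 2 + 3 * c ^ 2) * Δ₁ * u₁ + 512 * Δ₁ ^ 2 * d ^ 3) := by
  intro Δ₁ u₁ v₁
  have key : (2 * d * x ^ 3 + 3 * c * x ^ 2 + 1) * (16 * d * x ^ 3 - 12 * c * x ^ 2 - 1) ^ 2
      = 1728 * (a ^ 3 + b ^ 2) * (-(2 * d * x) + c) ^ 3
        + 1728 * (2 * a ^ 2 * d - b * c) * (-(2 * d * x) + c) ^ 2 * (x ^ 3 + 3 * a * x + 2 * b)
        + 144 * (16 * a * d ^ 2 + 3 * c ^ 2) * (-(2 * d * x) + c)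
          * (x ^ 3 + 3 * a * x + 2 * b) ^ 2
        + 512 * d ^ 3 * (x ^ 3 + 3 * a * x + 2 * b) ^ 3 := by
    rw [← habcd]
    ring
  have e : t * (y * v₁) ^ 2 = (t * y ^ 2) * v₁ ^ 2 := by ring
  rw [e, hxy]
  simp only [u₁, v₁, Δ₁]
  generalize x ^ 3 + 3 * a * x + 2 * b = P at *
  generalize a ^ 3 + b ^ 2 = D at *
  have l : P * (2 * d * x ^ 3 + 3 * c * x ^ 2 + 1)
      * (D * (16 * d * x ^ 3 - 12 * c * x ^ 2 - 1) / P ^ 2) ^ 2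
      = D ^ 2 * ((2 * d * x ^ 3 + 3 * c * x ^ 2 + 1)
        * (16 * d * x ^ 3 - 12 * c * x ^ 2 - 1) ^ 2) / P ^ 3 := by
    field_simp
  rw [l, key]
  field_simp
  ring
end

section
/- Let k be a field of characteristic neither 2 nor 3, and let a, b, c, d, t ∈ k satisfy 12ac + 16bd = 1, Δ₁ := a³ + b² ≠ 0, Δ₂ := c³ + d² ≠ 0, and t ≠ 0. Define f = (x³ + 3ax + 2b)(2dx³ + 3cx² + 1) and f₂ = X³ + 12(2bc² - ad)X² + 12(16b²c + 3a²)Δ₂·X + 512·Δ₂²·b³. Then for all x, y ∈ k with t·y² = f(x) and 2dx³ + 3cx² + 1 ≠ 0, setting u₂ = 12Δ₂·x²(ax - 2b)/(2dx³ + 3cx² + 1) and v₂ = Δ₂·(x³ + 12ax - 16b)/(2dx³ + 3cx² + 1)², one has t·(y·v₂)² = f₂(u₂). -/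
/-- second map identity of Lemma A.1: on the genus-2 curve
`t·y² = (x³ + 3ax + 2b)(2dx³ + 3cx² + 1)`, the map `(x, y) ↦ (u₂, y·v₂)` lands on the
elliptic curve `t·Y² = X³ + 12(2bc² - ad)X² + 12(16b²c + 3a²)Δ₂·X + 512·Δ₂²·b³`. -/
theorem stmt14 (k : Type*) [Field k] (h2 : (2 : k) ≠ 0) (h3 : (3 : k) ≠ 0)
    (a b c d t : k) (habcd : 12 * a * c + 16 * b * d = 1)
    (hΔ₁ : a ^ 3 + b ^ 2 ≠ 0) (hΔ₂ : c ^ 3 + d ^ 2 ≠ 0) (ht : t ≠ 0)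
    (x y : k)
    (hxy : t * y ^ 2 = (x ^ 3 + 3 * a * x + 2 * b) * (2 * d * x ^ 3 + 3 * c * x ^ 2 + 1))
    (hden : 2 * d * x ^ 3 + 3 * c * x ^ 2 + 1 ≠ 0) :
    (let Δ₂ := c ^ 3 + d ^ 2
     let u₂ := 12 * Δ₂ * (x ^ 2 * (a * x - 2 * b)) / (2 * d * x ^ 3 + 3 * c * x ^ 2 + 1)
     let v₂ := Δ₂ * (x ^ 3 + 12 * a * x - 16 * b) / (2 * d * x ^ 3 + 3 * c * x ^ 2 + 1) ^ 2
     t * (y * v₂) ^ 2 =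
       u₂ ^ 3 + 12 * (2 * b * c ^ 2 - a * d) * u₂ ^ 2
         + 12 * (16 * b ^ 2 * c + 3 * a ^ 2) * Δ₂ * u₂ + 512 * Δ₂ ^ 2 * b ^ 3) := by
  intro Δ₂ u₂ v₂
  have key : (x ^ 3 + 3 * a * x + 2 * b) * (x ^ 3 + 12 * a * x - 16 * b) ^ 2 =
      1728 * Δ₂ * (x ^ 2 * (a * x - 2 * b)) ^ 3
      + 1728 * (2 * b * c ^ 2 - a * d) * (x ^ 2 * (a * x - 2 * b)) ^ 2
        * (2 * d * x ^ 3 + 3 * c * x ^ 2 + 1)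
      + 144 * (16 * b ^ 2 * c + 3 * a ^ 2) * (x ^ 2 * (a * x - 2 * b))
        * (2 * d * x ^ 3 + 3 * c * x ^ 2 + 1) ^ 2
      + 512 * b ^ 3 * (2 * d * x ^ 3 + 3 * c * x ^ 2 + 1) ^ 3 := by
    simp only [Δ₂]
    linear_combination (-(((12 * a * c + 16 * b * d) ^ 2 + (12 * a * c + 16 * b * d) + 1) * x ^ 9
      + ((12 * a * c + 16 * b * d) + 1) * x ^ 6
        * ((3 * a * x + 2 * b) + 2 * (12 * a * x - 16 * b))
      + x ^ 3 * (2 * (3 * a * x + 2 * b) * (12 * a * x - 16 * b)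
        + (12 * a * x - 16 * b) ^ 2))) * habcd
  have e : t * (y * v₂) ^ 2 = (t * y ^ 2) * v₂ ^ 2 := by ring
  rw [e, hxy]
  simp only [u₂, v₂]
  clear_value Δ₂
  clear e u₂ v₂ hxy
  generalize 2 * d * x ^ 3 + 3 * c * x ^ 2 + 1 = D at *
  field_simp
  linear_combination Δ₂ ^ 2 * key
end
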